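/- For a linear order: let n ≥ 1, f : Fin n → ℝ, and w : Fin n → ℝ with w(i) ≥ 0 for all i. The minimum of ∑_{i} w(i)·[g(i) ≠ f(i)] over all monotone nondecreasing g : Fin n → ℝ is attained and equals ∑_{i} w(i) − max{∑_{i ∈ S} w(i) : S ⊆ Fin n such that for all i, j ∈ S with i < j, f(i) ≤ f(j)}; i.e., the optimal weighted L0 error equals the total weight minus the maximum weight of a nondecreasing subsequence of f. -/

import Mathlib

/-!
The set on which a monotone `g` agrees with `f` is a set on which `f` is monotone. Conversely, if
`f` is monotone on a finite set `S`, then `x ↦ sup {f i | i ∈ S, i ≤ x}`, cut off below by a lower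
bound of `f` on `S`, is monotone and agrees with `f` on `S`. As the weights are nonnegative, the
largest weight of an agreement set is therefore the largest weight of a set on which `f` is
monotone.
-/

section Extension

variable {α β : Type*} [Preorder α] {f : α → β} {S : Finset α}

theorem exists_monotone_eqOn_of_bddBelow [SemilatticeSup β] (hf : MonotoneOn f S)
    (hbdd : BddBelow (f '' S)) : ∃ g : α → β, Monotone g ∧ Set.EqOn g f S := by
  classical
  obtain ⟨a, ha⟩ := hbdd
  let values (x : α) : Finset β := insert a ({i ∈ S | i ≤ x}.image f)
  refine ⟨fun x => (values x).sup' (Finset.insert_nonempty _ _) id, fun x y hxy => ?_,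
    fun x hx => le_antisymm (Finset.sup'_le _ _ fun b hb => ?_) (Finset.le_sup' id ?_)⟩
  · have values_subset : values x ⊆ values y := by
      dsimp only [values]
      gcongr
    exact Finset.sup'_mono id values_subset _
  · obtain rfl | hb := Finset.mem_insert.mp hb
    · exact ha (Set.mem_image_of_mem f hx)
    · obtain ⟨i, hi, rfl⟩ := Finset.mem_image.mp hb
      obtain ⟨hiS, hix⟩ := Finset.mem_filter.mp hi
      exact hf hiS hx hix
  · exact Finset.mem_insert_of_mem
      (Finset.mem_image_of_mem f (Finset.mem_filter.mpr ⟨hx, le_rfl⟩))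

theorem exists_monotone_eqOn [Lattice β] (hf : MonotoneOn f S) :
    ∃ g : α → β, Monotone g ∧ Set.EqOn g f S := by
  cases isEmpty_or_nonempty α with
  | inl _ => exact ⟨f, fun x => isEmptyElim x, Set.eqOn_refl f S⟩
  | inr hα =>
    have : Nonempty β := hα.map f
    exact exists_monotone_eqOn_of_bddBelow hf (S.finite_toSet.image f).bddBelow

end Extension

theorem exists_monotoneOn_sum_max {ι β M : Type*} [Finite ι] [Preorder ι] [Preorder β]
    [AddCommMonoid M] [LinearOrder M] (f : ι → β) (w : ι → M) :
    ∃ S : Finset ι, MonotoneOn f S ∧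
      ∀ T : Finset ι, MonotoneOn f T → ∑ i ∈ T, w i ≤ ∑ i ∈ S, w i :=
  Set.exists_max_image {S : Finset ι | MonotoneOn f S} (fun S => ∑ i ∈ S, w i)
    (Set.toFinite _) ⟨∅, by simp [MonotoneOn]⟩

section L0Error

variable {ι β M : Type*} [Fintype ι] [DecidableEq β]

/-- The weighted `L0` distance between `f` and `g`: the total weight of the points at which `g`
differs from `f`. It is a sum over the disagreement set rather than a sum of products with `0` or
`1`, so that weights may lie in any additive commutative monoid. -/
def l0Error [AddCommMonoid M] (w : ι → M) (f g : ι → β) : M :=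
  ∑ i with g i ≠ f i, w i

theorem sum_mul_ite_eq_l0Error [NonAssocSemiring M] (w : ι → M) (f g : ι → β) :
    ∑ i, w i * (if g i = f i then 0 else 1) = l0Error w f g := by
  simp only [l0Error, Finset.sum_filter, mul_ite, mul_zero, mul_one, ne_eq, ite_not]

theorem l0Error_eq_sum_sub_sum_filter_eq [AddCommGroup M] (w : ι → M) (f g : ι → β) :
    l0Error w f g = ∑ i, w i - ∑ i with g i = f i, w i :=
  eq_sub_of_add_eq' (Finset.sum_filter_add_sum_filter_not _ _ _)

theorem monotoneOn_filter_eq [Preorder ι] [Preorder β] {f g : ι → β} (hg : Monotone g) :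
    MonotoneOn f ({i | g i = f i} : Finset ι) :=
  (hg.monotoneOn _).congr fun _ hi => (Finset.mem_filter.mp hi).2

theorem exists_monotone_sum_le_sum_filter_eq [Preorder ι] [Lattice β] [AddCommMonoid M]
    [PartialOrder M] [IsOrderedAddMonoid M] {f : ι → β} {w : ι → M} (hw : ∀ i, 0 ≤ w i)
    {S : Finset ι} (hS : MonotoneOn f S) :
    ∃ g : ι → β, Monotone g ∧ ∑ i ∈ S, w i ≤ ∑ i with g i = f i, w i := by
  obtain ⟨g, hg, hgS⟩ := exists_monotone_eqOn hS
  have subset_agreement : S ⊆ ({i | g i = f i} : Finset ι) := fun i hi =>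
    Finset.mem_filter.mpr ⟨Finset.mem_univ i, hgS hi⟩
  exact ⟨g, hg, Finset.sum_le_sum_of_subset_of_nonneg subset_agreement fun i _ _ => hw i⟩

theorem linear_L0_eq_total_sub_max_nondecreasing_subsequence_general [Preorder ι] [Lattice β]
    [AddCommGroup M] [LinearOrder M] [IsOrderedAddMonoid M]
    (f : ι → β) (w : ι → M) (hw : ∀ i, 0 ≤ w i) :
    ∃ g : ι → β, Monotone g ∧
      (∀ h : ι → β, Monotone h → l0Error w f g ≤ l0Error w f h) ∧
      IsGreatest {x : M | ∃ S : Finset ι, MonotoneOn f S ∧ x = ∑ i ∈ S, w i}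
        (∑ i, w i - l0Error w f g) := by
  obtain ⟨S, hS, S_max⟩ := exists_monotoneOn_sum_max f w
  obtain ⟨g, hg, S_le_agreement⟩ := exists_monotone_sum_le_sum_filter_eq hw hS
  have agreement_max : ∀ T : Finset ι, MonotoneOn f T →
      ∑ i ∈ T, w i ≤ ∑ i with g i = f i, w i :=
    fun T hT => (S_max T hT).trans S_le_agreement
  simp only [l0Error_eq_sum_sub_sum_filter_eq, sub_sub_cancel]
  refine ⟨g, hg, fun h hh => ?_, ⟨_, monotoneOn_filter_eq hg, rfl⟩, ?_⟩
  · exact sub_le_sub_left (agreement_max _ (monotoneOn_filter_eq hh)) _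
  · rintro _ ⟨T, hT, rfl⟩
    exact agreement_max T hT

end L0Error

/-- For a linear order, the optimal weighted L0 error over monotone nondecreasing
functions is attained and equals the total weight minus the maximum weight of a
nondecreasing subsequence of `f`. -/
theorem linear_L0_eq_total_sub_max_nondecreasing_subsequence
    (n : ℕ) (hn : 1 ≤ n) (f w : Fin n → ℝ) (hw : ∀ i, 0 ≤ w i) :
    ∃ g : Fin n → ℝ, Monotone g ∧
      (∀ h : Fin n → ℝ, Monotone h →
        ∑ i, w i * (if g i = f i then 0 else 1) ≤
          ∑ i, w i * (if h i = f i then 0 else 1)) ∧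
      ∑ i, w i * (if g i = f i then 0 else 1) =
        (∑ i, w i) -
          sSup {x : ℝ | ∃ S : Finset (Fin n),
            (∀ i ∈ S, ∀ j ∈ S, i < j → f i ≤ f j) ∧ x = ∑ i ∈ S, w i} := by
  obtain ⟨g, hg, g_min, total_sub_error_max⟩ :=
    linear_L0_eq_total_sub_max_nondecreasing_subsequence_general f w hw
  simp only [sum_mul_ite_eq_l0Error]
  simp only [monotoneOn_iff_forall_lt, Finset.mem_coe] at total_sub_error_max
  exact ⟨g, hg, g_min, by rw [total_sub_error_max.csSup_eq, sub_sub_cancel]⟩
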